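/- Let N ≥ 2, let β ≥ 0 and Δ > 0 be reals, and let H be an N×N complex Hermitian matrix whose smallest eigenvalue E₁ is simple and satisfies E − E₁ ≥ Δ for every other eigenvalue E of H. Let v be a unit eigenvector of H with eigenvalue E₁, and let A be an N×N complex Hermitian matrix with operator norm ‖A‖. Then |Tr(exp(−2βH)·A)/Tr(exp(−2βH)) − ⟨v, A v⟩| ≤ 2·‖A‖·(N − 1)·e^{−2βΔ}. -/

import Mathlib

/-!
In an orthonormal eigenbasis `u i` of `H`, with eigenvalues `λ i`, the Gibbs expectation of `A` at
inverse temperature `b` is the mean of the numbers `⟪u i, A (u i)⟫` with the Boltzmann weights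
`exp (-b λ i)`. Relative to the ground state, each of the other `N - 1` weights is at most
`exp (-bΔ)`, and it multiplies a deviation of at most `2‖A‖`.
-/

open Finset Matrix
open scoped InnerProductSpace

section WeightedMean

variable {ι E : Type*} [SeminormedAddCommGroup E] [NormedSpace ℝ E] {s : Finset ι} {k : ι}

lemma dist_centerMass_le [DecidableEq ι] {w : ι → ℝ} {z : ι → E} {D : ℝ}
    (hw : ∀ i ∈ s, 0 ≤ w i) (hsum : 0 < ∑ i ∈ s, w i) (hD : ∀ i ∈ s, dist (z i) (z k) ≤ D) :
    dist (s.centerMass w z) (z k) ≤ (∑ i ∈ s.erase k, w i) / (∑ i ∈ s, w i) * D := by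
  calc dist (s.centerMass w z) (z k)
      ≤ s.centerMass w fun i ↦ dist (z i) (z k) :=
        (convexOn_univ_dist (z k)).map_centerMass_le hw hsum fun _ _ ↦ Set.mem_univ _
    _ = (∑ i ∈ s.erase k, w i * dist (z i) (z k)) / ∑ i ∈ s, w i := by
        rw [sum_erase _ (by rw [dist_self, mul_zero]), div_eq_inv_mul]
        rfl
    _ ≤ (∑ i ∈ s.erase k, w i * D) / ∑ i ∈ s, w i := by
        gcongr with i hi
        · exact hw i (mem_of_mem_erase hi)
        · exact hD i (mem_of_mem_erase hi)
    _ = (∑ i ∈ s.erase k, w i) / (∑ i ∈ s, w i) * D := by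
        rw [← sum_mul, mul_div_right_comm]

lemma sum_erase_div_sum_le [DecidableEq ι] {R : Type*} [Field R] [LinearOrder R]
    [IsStrictOrderedRing R] {w : ι → R} {q : R} (hw : ∀ i ∈ s, 0 ≤ w i) (hk : k ∈ s)
    (hwk : 0 < w k) (hq : ∀ i ∈ s, i ≠ k → w i ≤ q * w k) :
    (∑ i ∈ s.erase k, w i) / (∑ i ∈ s, w i) ≤ (#s - 1) * q := by
  have hsum : ∑ i ∈ s.erase k, w i ≤ (#s - 1) * q * w k := by
    calc ∑ i ∈ s.erase k, w i
        ≤ #(s.erase k) • (q * w k) :=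
          sum_le_card_nsmul _ _ _ fun i hi ↦ hq i (mem_of_mem_erase hi) (ne_of_mem_erase hi)
      _ = (#s - 1) * q * w k := by rw [nsmul_eq_mul, cast_card_erase_of_mem hk, mul_assoc]
  calc (∑ i ∈ s.erase k, w i) / (∑ i ∈ s, w i)
      ≤ (∑ i ∈ s.erase k, w i) / w k := by
        gcongr
        · exact sum_nonneg fun i hi ↦ hw i (mem_of_mem_erase hi)
        · exact single_le_sum hw hk
    _ ≤ (#s - 1) * q := (div_le_iff₀ hwk).2 hsum

lemma dist_centerMass_le_of_le_mul {w : ι → ℝ} {z : ι → E} {q D : ℝ}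
    (hw : ∀ i ∈ s, 0 ≤ w i) (hk : k ∈ s) (hwk : 0 < w k)
    (hq : ∀ i ∈ s, i ≠ k → w i ≤ q * w k) (hD : ∀ i ∈ s, dist (z i) (z k) ≤ D) :
    dist (s.centerMass w z) (z k) ≤ (#s - 1) * q * D := by
  classical
  have hD_nonneg : 0 ≤ D := dist_nonneg.trans (hD k hk)
  have hsum : 0 < ∑ i ∈ s, w i := hwk.trans_le (single_le_sum hw hk)
  exact (dist_centerMass_le hw hsum hD).trans
    (mul_le_mul_of_nonneg_right (sum_erase_div_sum_le hw hk hwk hq) hD_nonneg)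

end WeightedMean

section InnerProductSpace

variable {𝕜 E : Type*} [RCLike 𝕜] [SeminormedAddCommGroup E] [InnerProductSpace 𝕜 E]

lemma norm_inner_map_le {F : Type*} [SeminormedAddCommGroup F] [InnerProductSpace 𝕜 F]
    (T : E →L[𝕜] F) (x : F) (y : E) : ‖⟪x, T y⟫_𝕜‖ ≤ ‖T‖ * ‖x‖ * ‖y‖ :=
  calc ‖⟪x, T y⟫_𝕜‖ ≤ ‖x‖ * ‖T y‖ := norm_inner_le_norm x (T y)
    _ ≤ ‖x‖ * (‖T‖ * ‖y‖) := by gcongr; exact T.le_opNorm y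
    _ = ‖T‖ * ‖x‖ * ‖y‖ := by ring

lemma inner_smul_map_smul_of_norm_eq_one (T : E →ₗ[𝕜] E) {c : 𝕜} (hc : ‖c‖ = 1) (x : E) :
    ⟪c • x, T (c • x)⟫_𝕜 = ⟪x, T x⟫_𝕜 := by
  rw [map_smul, inner_smul_left, inner_smul_right, ← mul_assoc, RCLike.conj_mul, hc]
  simp

end InnerProductSpace

section MatrixExponential

lemma pow_mulVec_eq_smul {S n : Type*} [CommSemiring S] [Fintype n] [DecidableEq n]
    {M : Matrix n n S} {μ : S} {u : n → S} (hu : M *ᵥ u = μ • u) (j : ℕ) :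
    M ^ j *ᵥ u = μ ^ j • u := by
  induction j with
  | zero => rw [pow_zero, pow_zero, one_mulVec, one_smul]
  | succ j ih => rw [pow_succ', ← mulVec_mulVec, ih, mulVec_smul, hu, smul_smul, pow_succ]

variable {R n : Type*} [NormedCommRing R] [NormedAlgebra ℚ R] [CompleteSpace R]
  [Fintype n] [DecidableEq n]

lemma hasSum_matrix_exp (M : Matrix n n R) :
    HasSum (fun j : ℕ ↦ (j.factorial⁻¹ : ℚ) • M ^ j) (NormedSpace.exp M) := by
  open scoped Matrix.Norms.Operator in
  -- The uniformity of the operator norm is the product uniformity, but only after unfolding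
  -- definitions that instance search does not unfold.
  have : @CompleteSpace (Matrix n n R) PseudoMetricSpace.toUniformSpace :=
    inferInstanceAs (CompleteSpace (n → n → R))
  exact NormedSpace.exp_series_hasSum_exp' (𝕂 := ℚ) M

lemma exp_mulVec_eq_smul {M : Matrix n n R} {μ : R} {u : n → R} (hu : M *ᵥ u = μ • u) :
    NormedSpace.exp M *ᵥ u = NormedSpace.exp μ • u := by
  have hM : HasSum (fun j : ℕ ↦ (j.factorial⁻¹ : ℚ) • M ^ j *ᵥ u) (NormedSpace.exp M *ᵥ u) := by
    simpa only [Function.comp_def, mulVec.addMonoidHomLeft, AddMonoidHom.coe_mk, ZeroHom.coe_mk,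
      smul_mulVec] using (hasSum_matrix_exp M).map (mulVec.addMonoidHomLeft u)
        (continuous_id.matrix_mulVec continuous_const)
  have hμ : HasSum (fun j : ℕ ↦ (j.factorial⁻¹ : ℚ) • μ ^ j • u) (NormedSpace.exp μ • u) := by
    simpa only [smul_assoc] using
      (NormedSpace.exp_series_hasSum_exp' (𝕂 := ℚ) μ).smul_const u
  simp only [pow_mulVec_eq_smul hu] at hM
  exact hM.unique hμ

end MatrixExponential

section Euclidean

variable {𝕜 n : Type*} [RCLike 𝕜] [Fintype n] [DecidableEq n]

lemma star_dotProduct_mulVec_eq_inner (A : Matrix n n 𝕜) (v : n → 𝕜) :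
    star v ⬝ᵥ A *ᵥ v = ⟪WithLp.toLp 2 v, toEuclideanCLM (𝕜 := 𝕜) A (WithLp.toLp 2 v)⟫_𝕜 := by
  rw [EuclideanSpace.inner_eq_star_dotProduct, dotProduct_comm, ofLp_toEuclideanCLM]

lemma trace_eq_sum_inner_toEuclideanCLM {ι : Type*} [Fintype ι] (A : Matrix n n 𝕜)
    (b : OrthonormalBasis ι 𝕜 (EuclideanSpace 𝕜 n)) :
    A.trace = ∑ i, ⟪b i, toEuclideanCLM (𝕜 := 𝕜) A (b i)⟫_𝕜 := by
  rw [← trace_toLin_eq A (PiLp.basisFun 2 𝕜 n), ← toLpLin_eq_toLin,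
    LinearMap.trace_eq_sum_inner _ b]
  rfl

end Euclidean

section Gibbs

variable {𝕜 n : Type*} [RCLike 𝕜] [Fintype n] [DecidableEq n]

/-- The expectation `Tr(exp(-bH) A) / Tr(exp(-bH))` of the observable `A` in the Gibbs state of the
Hamiltonian `H` at inverse temperature `b`. The normalization of the Gibbs state is kept as a
quotient of traces. -/
noncomputable def gibbsExpectation (b : ℝ) (H A : Matrix n n 𝕜) : 𝕜 :=
  (NormedSpace.exp (((-b : ℝ) : 𝕜) • H) * A).trace / (NormedSpace.exp (((-b : ℝ) : 𝕜) • H)).trace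

variable {H : Matrix n n 𝕜} (hH : H.IsHermitian)

lemma exp_smul_mulVec_eigenvectorBasis (t : ℝ) (i : n) :
    NormedSpace.exp ((t : 𝕜) • H) *ᵥ (hH.eigenvectorBasis i).ofLp =
      (Real.exp (t * hH.eigenvalues i) : 𝕜) • (hH.eigenvectorBasis i).ofLp := by
  have heigen : ((t : 𝕜) • H) *ᵥ (hH.eigenvectorBasis i).ofLp =
      ((t * hH.eigenvalues i : ℝ) : 𝕜) • (hH.eigenvectorBasis i).ofLp := by
    rw [smul_mulVec, hH.mulVec_eigenvectorBasis, RCLike.real_smul_eq_coe_smul (K := 𝕜), smul_smul,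
      RCLike.ofReal_mul]
  have hexp : NormedSpace.exp ((t * hH.eigenvalues i : ℝ) : 𝕜) =
      (Real.exp (t * hH.eigenvalues i) : 𝕜) := by
    rw [Real.exp_eq_exp_ℝ]
    exact (NormedSpace.algebraMap_exp_comm _).symm
  rw [exp_mulVec_eq_smul heigen, hexp]

lemma trace_exp_smul_mul (t : ℝ) (A : Matrix n n 𝕜) :
    (NormedSpace.exp ((t : 𝕜) • H) * A).trace =
      ∑ i, (Real.exp (t * hH.eigenvalues i) : 𝕜) *
        ⟪hH.eigenvectorBasis i, toEuclideanCLM (𝕜 := 𝕜) A (hH.eigenvectorBasis i)⟫_𝕜 := by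
  have hexp (i : n) : toEuclideanCLM (𝕜 := 𝕜) (NormedSpace.exp ((t : 𝕜) • H))
      (hH.eigenvectorBasis i) =
        (Real.exp (t * hH.eigenvalues i) : 𝕜) • hH.eigenvectorBasis i :=
    congrArg (WithLp.toLp 2) (exp_smul_mulVec_eigenvectorBasis hH t i)
  rw [trace_mul_comm, trace_eq_sum_inner_toEuclideanCLM _ hH.eigenvectorBasis]
  simp only [map_mul, mul_apply_eq_comp, hexp, map_smul, inner_smul_right]

lemma trace_exp_smul (t : ℝ) :
    (NormedSpace.exp ((t : 𝕜) • H)).trace = ∑ i, (Real.exp (t * hH.eigenvalues i) : 𝕜) := by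
  simpa using trace_exp_smul_mul hH t 1

lemma gibbsExpectation_eq_centerMass (b : ℝ) (A : Matrix n n 𝕜) :
    gibbsExpectation b H A =
      univ.centerMass (fun i ↦ Real.exp (-b * hH.eigenvalues i)) fun i ↦
        ⟪hH.eigenvectorBasis i, toEuclideanCLM (𝕜 := 𝕜) A (hH.eigenvectorBasis i)⟫_𝕜 := by
  rw [gibbsExpectation, trace_exp_smul_mul hH, trace_exp_smul hH, centerMass, div_eq_inv_mul,
    RCLike.real_smul_eq_coe_mul]
  simp only [RCLike.real_smul_eq_coe_mul, RCLike.ofReal_inv, RCLike.ofReal_sum]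

lemma inner_eigenvectorBasis_eq_zero {i : n} {μ : 𝕜} (hi : (hH.eigenvalues i : 𝕜) ≠ μ)
    {v : n → 𝕜} (hv : H *ᵥ v = μ • v) : ⟪hH.eigenvectorBasis i, WithLp.toLp 2 v⟫_𝕜 = 0 := by
  have hsymm : (toEuclideanLin H).IsSymmetric := isSymmetric_toEuclideanLin_iff.2 hH
  have hu_mem : hH.eigenvectorBasis i ∈
      Module.End.eigenspace (toEuclideanLin H) (hH.eigenvalues i : 𝕜) := by
    rw [Module.End.mem_eigenspace_iff, ← RCLike.real_smul_eq_coe_smul]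
    exact congrArg (WithLp.toLp 2) (hH.mulVec_eigenvectorBasis i)
  have hv_mem : WithLp.toLp 2 v ∈ Module.End.eigenspace (toEuclideanLin H) μ :=
    Module.End.mem_eigenspace_iff.2 (congrArg (WithLp.toLp 2) hv)
  exact hsymm.orthogonalFamily_eigenspaces.pairwise hi.symm hv_mem _ hu_mem

lemma exists_smul_eigenvectorBasis_eq {k : n}
    (hk : ∀ i ≠ k, hH.eigenvalues i ≠ hH.eigenvalues k) {v : n → 𝕜}
    (hv : H *ᵥ v = (hH.eigenvalues k : 𝕜) • v) :
    ∃ c : 𝕜, c • hH.eigenvectorBasis k = WithLp.toLp 2 v := by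
  refine ⟨⟪hH.eigenvectorBasis k, WithLp.toLp 2 v⟫_𝕜, ?_⟩
  rw [← Fintype.sum_eq_single (f := fun i ↦
    ⟪hH.eigenvectorBasis i, WithLp.toLp 2 v⟫_𝕜 • hH.eigenvectorBasis i) k fun i hi ↦ by
      rw [inner_eigenvectorBasis_eq_zero hH (RCLike.ofReal_injective.ne (hk i hi)) hv, zero_smul]]
  exact hH.eigenvectorBasis.sum_repr' (WithLp.toLp 2 v)

lemma star_dotProduct_mulVec_eq_of_mulVec_eq_smul {k : n}
    (hk : ∀ i ≠ k, hH.eigenvalues i ≠ hH.eigenvalues k) {v : n → 𝕜}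
    (hv : H *ᵥ v = (hH.eigenvalues k : 𝕜) • v) (hunit : star v ⬝ᵥ v = 1) (A : Matrix n n 𝕜) :
    star v ⬝ᵥ A *ᵥ v =
      ⟪hH.eigenvectorBasis k, toEuclideanCLM (𝕜 := 𝕜) A (hH.eigenvectorBasis k)⟫_𝕜 := by
  obtain ⟨c, hc⟩ := exists_smul_eigenvectorBasis_eq hH hk hv
  have hv_norm : ‖WithLp.toLp 2 v‖ = 1 := by
    rw [norm_eq_sqrt_re_inner (𝕜 := 𝕜), EuclideanSpace.inner_toLp_toLp, dotProduct_comm, hunit,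
      RCLike.one_re, Real.sqrt_one]
  have hc_norm : ‖c‖ = 1 := by
    rwa [← hc, norm_smul, hH.eigenvectorBasis.norm_eq_one, mul_one] at hv_norm
  rw [star_dotProduct_mulVec_eq_inner, ← hc]
  exact inner_smul_map_smul_of_norm_eq_one (toEuclideanCLM (𝕜 := 𝕜) A).toLinearMap hc_norm _

theorem stmt8_general {b Δ : ℝ} (hb : 0 ≤ b) (hΔ : 0 < Δ) {k : n}
    (hgap : ∀ i ≠ k, hH.eigenvalues k + Δ ≤ hH.eigenvalues i)
    {v : n → 𝕜} (hv : H *ᵥ v = (hH.eigenvalues k : 𝕜) • v) (hunit : star v ⬝ᵥ v = 1)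
    (A : Matrix n n 𝕜) :
    ‖gibbsExpectation b H A - star v ⬝ᵥ A *ᵥ v‖ ≤
      2 * ‖toEuclideanCLM (𝕜 := 𝕜) A‖ * ((Fintype.card n : ℝ) - 1) * Real.exp (-(b * Δ)) := by
  set u := hH.eigenvectorBasis
  set w : n → ℝ := fun i ↦ Real.exp (-b * hH.eigenvalues i)
  set a : n → 𝕜 := fun i ↦ ⟪u i, toEuclideanCLM (𝕜 := 𝕜) A (u i)⟫_𝕜
  have hw (i : n) : 0 < w i := Real.exp_pos _
  have hw_gap (i : n) (hi : i ≠ k) : w i ≤ Real.exp (-(b * Δ)) * w k := by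
    rw [← Real.exp_add, Real.exp_le_exp]
    linarith [mul_le_mul_of_nonneg_left (hgap i hi) hb]
  have ha (i : n) : ‖a i‖ ≤ ‖toEuclideanCLM (𝕜 := 𝕜) A‖ := by
    simpa [u.norm_eq_one] using norm_inner_map_le (toEuclideanCLM (𝕜 := 𝕜) A) (u i) (u i)
  have hdist (i : n) : dist (a i) (a k) ≤ 2 * ‖toEuclideanCLM (𝕜 := 𝕜) A‖ := by
    linarith [dist_le_norm_add_norm (a i) (a k), ha i, ha k]
  have hground : star v ⬝ᵥ A *ᵥ v = a k :=
    star_dotProduct_mulVec_eq_of_mulVec_eq_smul hH (fun i hi ↦ by linarith [hgap i hi]) hv hunit A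
  rw [gibbsExpectation_eq_centerMass hH, hground, ← dist_eq_norm]
  calc dist (univ.centerMass w a) (a k)
      ≤ (#(univ : Finset n) - 1) * Real.exp (-(b * Δ)) * (2 * ‖toEuclideanCLM (𝕜 := 𝕜) A‖) :=
        dist_centerMass_le_of_le_mul (fun i _ ↦ (hw i).le) (mem_univ k) (hw k)
          (fun i _ ↦ hw_gap i) fun i _ ↦ hdist i
    _ = 2 * ‖toEuclideanCLM (𝕜 := 𝕜) A‖ * ((Fintype.card n : ℝ) - 1) * Real.exp (-(b * Δ)) := by
        rw [card_univ]
        ring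

end Gibbs

/-- Thermal expectation values of a gapped Hamiltonian: if the smallest eigenvalue `E₁` of
the Hermitian matrix `H` is simple and every other eigenvalue is at least `E₁ + Δ`, `v` is a
unit ground state, and `A` is a Hermitian observable, then
`|Tr(exp(-2βH) A)/Tr(exp(-2βH)) - ⟨v, A v⟩| ≤ 2 ‖A‖ (N-1) exp(-2βΔ)`, where `‖A‖` is the
operator norm of `A`. -/
theorem stmt8 (N : ℕ) (hN : 2 ≤ N) (β Δ : ℝ) (hβ : 0 ≤ β) (hΔ : 0 < Δ)
    (H : Matrix (Fin N) (Fin N) ℂ) (hH : H.IsHermitian) (E₁ : ℝ)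
    (hsimple : ∃! i, hH.eigenvalues i = E₁)
    (hmin : ∀ i, hH.eigenvalues i = E₁ ∨ E₁ + Δ ≤ hH.eigenvalues i)
    (v : Fin N → ℂ) (hv : H.mulVec v = (E₁ : ℂ) • v)
    (hvunit : dotProduct (star v) v = 1)
    (A : Matrix (Fin N) (Fin N) ℂ) (hA : A.IsHermitian) :
    norm
        ((Matrix.trace (NormedSpace.exp (((-(2 * β) : ℝ) : ℂ) • H) * A)) /
            (Matrix.trace (NormedSpace.exp (((-(2 * β) : ℝ) : ℂ) • H))) -
          dotProduct (star v) (A.mulVec v)) ≤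
      2 * ‖Matrix.toEuclideanCLM (𝕜 := ℂ) A‖ * ((N : ℝ) - 1) * Real.exp (-(2 * β * Δ)) := by
  obtain ⟨k, rfl, hunique⟩ := hsimple
  simpa only [Fintype.card_fin] using! stmt8_general hH (mul_nonneg zero_le_two hβ) hΔ
    (fun i hi ↦ (hmin i).resolve_left (mt (hunique i) hi)) hv hvunit A
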